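/- Let X be a countably infinite set and S a subsemigroup of I_X. Suppose there exist a sequence (α_i)_{i∈ω} ∈ X^ω of distinct elements, an unbounded sequence of positive integers (N_i)_{i∈ω}, and a sequence of non-empty subsets D_i ⊆ X^i (i ∈ ω) such that: (i) for each i ∈ ω and each (β_0,…,β_i) ∈ D_{i+1}, we have (β_0,…,β_{i−1}) ∈ D_i; (ii) for each i ∈ ω and each (β_0,…,β_{i−1}) ∈ D_i, there exist at least N_i elements β ∈ X with (β_0,…,β_{i−1},β) ∈ D_{i+1}; and (iii) whenever (β_i)_{i∈ω} ∈ X^ω satisfies (β_0,…,β_{i−1}) ∈ D_i for every i ∈ ω, there exist g, g′ ∈ S such that α_i g = β_i for all i and β_i g′ = α_i for all i. Then PStab(𝒫_ω) ≼ S. -/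

import Mathlib

open Set Cardinal

universe u

/-- A chart on `X` (an element of the symmetric inverse monoid `I_X`): a partial
bijection between subsets of `X`, encoded as a functional, injective relation,
i.e. a set of pairs. -/
structure Chart (X : Type u) : Type u where
  rel : Set (X × X)
  functional : ∀ ⦃x y y'⦄, (x, y) ∈ rel → (x, y') ∈ rel → y = y'
  injective : ∀ ⦃x x' y⦄, (x, y) ∈ rel → (x', y) ∈ rel → x = x'

namespace Chart

variable {X : Type u}

/-- Composition of charts: compose wherever possible. -/
instance : Mul (Chart X) :=
  ⟨fun f g =>
    { rel := {p | ∃ y, (p.1, y) ∈ f.rel ∧ (y, p.2) ∈ g.rel}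
      functional := by
        rintro x y y' ⟨z, hz1, hz2⟩ ⟨w, hw1, hw2⟩
        obtain rfl : z = w := f.functional hz1 hw1
        exact g.functional hz2 hw2
      injective := by
        rintro x x' y ⟨z, hz1, hz2⟩ ⟨w, hw1, hw2⟩
        obtain rfl : z = w := g.injective hz2 hw2
        exact f.injective hz1 hw1 }⟩

/-- The inverse chart. -/
instance : Inv (Chart X) :=
  ⟨fun f =>
    { rel := {p | (p.2, p.1) ∈ f.rel}
      functional := fun _ _ _ h h' => f.injective h h'
      injective := fun _ _ _ h h' => f.functional h h' }⟩

/-- The domain of a chart. -/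
def dom (f : Chart X) : Set X := {x | ∃ y, (x, y) ∈ f.rel}

/-- The range (image) of a chart. -/
def ran (f : Chart X) : Set X := {y | ∃ x, (x, y) ∈ f.rel}

end Chart

/-- Membership in the subsemigroup of `I_X` generated by a set of charts. -/
inductive InGen {X : Type u} (S : Set (Chart X)) : Chart X → Prop
  | base {f : Chart X} : f ∈ S → InGen S f
  | mul {f g : Chart X} : InGen S f → InGen S g → InGen S (f * g)

/-- The subsemigroup of `I_X` generated by a set of charts. -/
def Sgen {X : Type u} (S : Set (Chart X)) : Set (Chart X) := {f | InGen S f}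

/-- The Bergman–Shelah preorder `S ≼ T` on subsets of `I_X`: there is a countable
subset `U ⊆ I_X` with `S` contained in the subsemigroup generated by `T ∪ U`. -/
def BSleq {X : Type u} (S T : Set (Chart X)) : Prop :=
  ∃ U : Set (Chart X), U.Countable ∧ S ⊆ Sgen (T ∪ U)

/-- Bergman–Shelah equivalence `S ≈ T`. -/
def BSequiv {X : Type u} (S T : Set (Chart X)) : Prop := BSleq S T ∧ BSleq T S

/-- The Bergman–Shelah preorder relative to a cardinal `κ`: `S ≼_κ T` iff there is
`U ⊆ I_X` with `|U| < κ` and `S` contained in the subsemigroup generated by `T ∪ U`. -/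
def BSleqC {X : Type u} (κ : Cardinal.{u}) (S T : Set (Chart X)) : Prop :=
  ∃ U : Set (Chart X), #↥U < κ ∧ S ⊆ Sgen (T ∪ U)

/-- Bergman–Shelah equivalence relative to a cardinal `κ`. -/
def BSequivC {X : Type u} (κ : Cardinal.{u}) (S T : Set (Chart X)) : Prop :=
  BSleqC κ S T ∧ BSleqC κ T S

/-- A chart is a permutation of `X` if it is everywhere defined and surjective. -/
def IsPermChart {X : Type u} (f : Chart X) : Prop :=
  (∀ x : X, ∃ y, (x, y) ∈ f.rel) ∧ ∀ y : X, ∃ x, (x, y) ∈ f.rel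

/-- The partwise stabiliser of a family of subsets of `X`: all permutations of `X`
mapping each member of the family onto itself. -/
def PStab {X : Type u} (P : Set (Set X)) : Set (Chart X) :=
  {f | IsPermChart f ∧ ∀ B ∈ P, {y | ∃ x ∈ B, (x, y) ∈ f.rel} = B}

/-- A subset of `I_X` closed under composition. -/
def IsSubsemigroup {X : Type u} (S : Set (Chart X)) : Prop :=
  ∀ f ∈ S, ∀ g ∈ S, f * g ∈ S

/-- A subsemigroup of `I_X` closed under inversion. -/
def IsInverseSubsemigroup {X : Type u} (S : Set (Chart X)) : Prop :=
  IsSubsemigroup S ∧ ∀ f ∈ S, f⁻¹ ∈ S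

/-- The orbit of a point under a set of charts: `{x} ∪ {xf : f ∈ M, x ∈ dom f}`. -/
def ChartOrbit {X : Type u} (M : Set (Chart X)) (x : X) : Set X :=
  insert x {y | ∃ f ∈ M, (x, y) ∈ f.rel}

/-- The cone of a point under a set of charts: `{xs : s ∈ S, x ∈ dom s}`. -/
def ChartCone {X : Type u} (S : Set (Chart X)) (x : X) : Set X :=
  {y | ∃ f ∈ S, (x, y) ∈ f.rel}

/-- The semilattice of idempotents of `I_X`: the partial identity charts. -/
def EX (X : Type u) : Set (Chart X) := {f | ∀ x y : X, (x, y) ∈ f.rel → y = x}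

/-- A `κ`-uniform partition: every part has cardinality `κ`. -/
def IsUniformPartition {X : Type u} (κ : Cardinal.{u}) (P : Set (Set X)) : Prop :=
  Setoid.IsPartition P ∧ ∀ B ∈ P, #↥B = κ

/-- A `κ`-unbounded partition: all parts have cardinality `< κ` but no cardinal
`c < κ` bounds the cardinalities of all parts. -/
def IsUnboundedPartition {X : Type u} (κ : Cardinal.{u}) (P : Set (Set X)) : Prop :=
  Setoid.IsPartition P ∧ (∀ B ∈ P, #↥B < κ) ∧ ¬∃ c < κ, ∀ B ∈ P, #↥B ≤ c

/-- A `κ`-bounded partition: some cardinal `c < κ` bounds the cardinalities of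
all parts. -/
def IsBoundedPartition {X : Type u} (κ : Cardinal.{u}) (P : Set (Set X)) : Prop :=
  Setoid.IsPartition P ∧ ∃ c < κ, ∀ B ∈ P, #↥B ≤ c

/-- A rooted tree on (a subset of) `X`, encoded via its parent function: every
vertex reaches the root by finitely many applications of `par`. -/
structure RTree (X : Type u) : Type u where
  verts : Set X
  root : X
  root_mem : root ∈ verts
  par : X → X
  par_mem : ∀ x ∈ verts, par x ∈ verts
  par_root : par root = root
  par_reaches : ∀ x ∈ verts, ∃ n : ℕ, par^[n] x = root

namespace RTree

variable {X : Type u}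

/-- `T.anc x y` : `x` is an ancestor of `y` (or `x = y`), i.e. `x` lies on the
rooted path to `y`. -/
def anc (T : RTree X) (x y : X) : Prop := ∃ n : ℕ, T.par^[n] y = x

/-- The level of a vertex: its distance to the root. -/
noncomputable def level (T : RTree X) (x : X) : ℕ := sInf {n : ℕ | T.par^[n] x = T.root}

/-- The children of a vertex. -/
def children (T : RTree X) (x : X) : Set X :=
  {y | y ∈ T.verts ∧ T.par y = x ∧ y ≠ x}

/-- The neighbours of a vertex in the tree (its children together with its
parent, if the vertex is not the root); the degree of the vertex is the size
of this set. -/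
def nbhd (T : RTree X) (x : X) : Set X :=
  {y | y ∈ T.verts ∧ ((T.par y = x ∧ y ≠ x) ∨ (T.par x = y ∧ x ≠ y))}

/-- `P` is the vertex set of a (finite or infinite) path of `T` starting at the
root: a nonempty set of vertices closed under taking parents and linearly
ordered by ancestry. -/
def IsRootedPath (T : RTree X) (P : Set X) : Prop :=
  P.Nonempty ∧ P ⊆ T.verts ∧ (∀ x ∈ P, T.par x ∈ P) ∧
    ∀ x ∈ P, ∀ y ∈ P, T.anc x y ∨ T.anc y x

end RTree

/-- `T'` is a subtree of `T`: a rooted tree on a subset of the vertices of `T`,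
with the same root and the same parent relation. -/
def IsSubtree {X : Type u} (T' T : RTree X) : Prop :=
  T'.verts ⊆ T.verts ∧ T'.root = T.root ∧ ∀ x ∈ T'.verts, T'.par x = T.par x

/-- `Q` is a quasi-subtree of `T`: a rooted tree on a subset of the vertices of
`T` preserving the ancestry relation and the levels of `T`. -/
def IsQuasiSubtree {X : Type u} (Q T : RTree X) : Prop :=
  Q.verts ⊆ T.verts ∧
    (∀ x ∈ Q.verts, ∀ y ∈ Q.verts, (Q.anc x y ↔ T.anc x y)) ∧
    ∀ x ∈ Q.verts, ∀ y ∈ Q.verts, (Q.level x = Q.level y ↔ T.level x = T.level y)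

/-- Isomorphism of rooted trees: a bijection of the vertex sets mapping root to
root and commuting with the parent functions. -/
def RTreeIso {X : Type u} {Y : Type u} (T : RTree X) (R : RTree Y) : Prop :=
  ∃ φ : X → Y, Set.BijOn φ T.verts R.verts ∧ φ T.root = R.root ∧
    ∀ x ∈ T.verts, φ (T.par x) = R.par (φ x)

/-- The semigroup `𝒮(T)` of path-bijections of a rooted tree `T`: charts whose
domain and range are vertex sets of rooted paths and which preserve levels. -/
def pathSg {X : Type u} (T : RTree X) : Set (Chart X) :=
  {f | (∃ P, T.IsRootedPath P ∧ Chart.dom f = P) ∧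
    (∃ Q, T.IsRootedPath Q ∧ Chart.ran f = Q) ∧
    ∀ x y : X, (x, y) ∈ f.rel → T.level y = T.level x}

/-!
Let `√` be the integer square root and number the points of `X` injectively by `ν` so that `√ ∘ ν`
is constant on every part. A chart `f` preserving the parts then preserves the level `√ (ν x)`, and
there are only finitely many traces of such charts on the finite set of points of level at most `n`.
Because the branching numbers `N i` are unbounded, each `f` can be assigned a branch `β f` of the
tree `D` such that, along a subsequence `ι`, the entry `β f (ι n)` encodes exactly the number `n`
and the trace of `f` up to level `√ n`.

The encoding entries are distinct enough for *one* chart `w` to send `β f (ι (ν x))` to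
`β f (ι (ν y))` whenever `f` sends `x` to `y`, simultaneously for all `f`. With the chart
`u : x ↦ α (ι (ν x))` and `g`, `g'` in `S` translating between `α` and `β f`, one gets
`f = u g w g' u⁻¹`.
-/

section Selection

variable {Q I X : Type*} [Finite Q]

theorem exists_injective_forall_mem (C : Q → Set X) (hC : ∀ q, (Nat.card Q : ℕ∞) ≤ (C q).encard) :
    ∃ b : Q → X, Function.Injective b ∧ ∀ q, b q ∈ C q := by
  classical
  have := Fintype.ofFinite Q
  choose T hTC hTcard using fun q ↦ Set.exists_subset_encard_eq (hC q)
  have hTfin q : (T q).Finite := finite_of_encard_eq_coe (hTcard q)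
  have hcard q : Fintype.card Q = (hTfin q).toFinset.card := by
    rw [← Nat.card_eq_fintype_card, ← Nat.cast_inj (R := ℕ∞), ← hTcard q,
      (hTfin q).encard_eq_coe_toFinset_card]
  have hall (s : Finset Q) : s.card ≤ (s.biUnion fun q ↦ (hTfin q).toFinset).card := by
    rcases s.eq_empty_or_nonempty with rfl | ⟨q, hq⟩
    · exact Nat.zero_le _
    · calc s.card ≤ Fintype.card Q := s.card_le_univ
        _ = (hTfin q).toFinset.card := hcard q
        _ ≤ _ := Finset.card_le_card
          (Finset.subset_biUnion_of_mem (fun q ↦ (hTfin q).toFinset) hq)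
  obtain ⟨b, hb, hbT⟩ := (Finset.all_card_le_biUnion_card_iff_exists_injective _).1 hall
  exact ⟨b, hb, fun q ↦ hTC q ((hTfin q).mem_toFinset.1 (hbT q))⟩

theorem exists_injective_forall_mem_notMem_range [Finite I] (C : Q → Set X) (v : I → X)
    (hC : ∀ q, ((Nat.card Q + Nat.card I : ℕ) : ℕ∞) ≤ (C q).encard) :
    ∃ b : Q → X, Function.Injective b ∧ (∀ q, b q ∈ C q) ∧ ∀ q, b q ∉ range v := by
  have hv : (range v).encard ≤ Nat.card I := by
    rw [← (finite_range v).cast_ncard_eq, Nat.cast_le, ← Nat.card_coe_set_eq]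
    exact Finite.card_range_le v
  have hdiff q : (Nat.card Q : ℕ∞) ≤ (C q \ range v).encard := by
    refine (ENat.add_le_add_iff_right (ENat.natCast_ne_top (Nat.card I))).1 ?_
    calc (Nat.card Q + Nat.card I : ℕ∞) ≤ (C q).encard := mod_cast hC q
      _ ≤ (C q \ range v).encard + (range v).encard := encard_le_encard_sdiff_add_encard _ _
      _ ≤ (C q \ range v).encard + Nat.card I := by gcongr
  obtain ⟨b, hb, hbC⟩ := exists_injective_forall_mem _ hdiff
  exact ⟨b, hb, fun q ↦ (hbC q).1, fun q ↦ (hbC q).2⟩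

end Selection

theorem exists_seq_forall_of_forall_lt {Y : Type*} [Nonempty Y] (P : ℕ → (ℕ → Y) → Y → Prop)
    (hcongr : ∀ {i a a' y}, (∀ j < i, a j = a' j) → P i a y → P i a' y)
    (hstep : ∀ i a, (∀ j < i, P j a (a j)) → ∃ y, P i a y) :
    ∃ a : ℕ → Y, ∀ i, P i a (a i) := by
  choose! next hnext using hstep
  let y₀ : Y := Classical.arbitrary Y
  let a : ℕ → Y := WellFoundedLT.fix fun i prev ↦ next i fun j ↦ if h : j < i then prev j h else y₀
  let trunc (i : ℕ) : ℕ → Y := fun j ↦ if j < i then a j else y₀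
  have ha i : a i = next i (trunc i) := WellFoundedLT.fix_eq _ _
  have htrunc {i j : ℕ} (h : j < i) : trunc i j = a j := if_pos h
  refine ⟨a, fun i ↦ ?_⟩
  induction i using Nat.strong_induction_on with
  | _ i ih =>
    rw [ha]
    refine hcongr (fun j ↦ htrunc) (hnext i _ fun j hj ↦ ?_)
    rw [htrunc hj]
    exact hcongr (fun l hl ↦ (htrunc (hl.trans hj)).symm) (ih j hj)

theorem frequently_atTop_le_of_not_bddAbove_range {Y : Type*} [LinearOrder Y] {N : ℕ → Y}
    (hN : ¬BddAbove (range N)) (m : Y) : ∃ᶠ i in Filter.atTop, m ≤ N i := by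
  by_contra h
  have hle : ∀ᶠ i in Filter.atTop, N i ≤ m :=
    (Filter.not_frequently.1 h).mono fun i ↦ le_of_not_ge
  exact hN (Filter.isBoundedUnder_of_eventually_le hle).bddAbove_range

section Tree

variable {F X : Type*} {D : (i : ℕ) → Set (Fin i → X)} {N ι : ℕ → ℕ} {r : ℕ → Setoid F}

theorem exists_child (hN : ∀ i, 0 < N i)
    (hD : ∀ i, ∀ β ∈ D i, (N i : ℕ∞) ≤ {b : X | Fin.snoc β b ∈ D (i + 1)}.encard)
    {i : ℕ} {β : Fin i → X} (hβ : β ∈ D i) : ∃ b, Fin.snoc β b ∈ D (i + 1) :=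
  encard_pos.1 ((Nat.cast_pos.2 (hN i)).trans_le (hD i β hβ))

theorem exists_child_selection {Q I : Type*} [Finite Q] [Finite I] (hN : ∀ i, 0 < N i)
    (hD : ∀ i, ∀ β ∈ D i, (N i : ℕ∞) ≤ {b : X | Fin.snoc β b ∈ D (i + 1)}.encard)
    {i : ℕ} (p : Q → Fin i → X) (hp : ∀ q, p q ∈ D i) (v : I → X) :
    ∃ b : Q → X, (∀ q, Fin.snoc (p q) (b q) ∈ D (i + 1)) ∧
      (Nat.card Q + Nat.card I ≤ N i → Function.Injective b ∧ ∀ q, b q ∉ range v) := by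
  by_cases hcard : Nat.card Q + Nat.card I ≤ N i
  · obtain ⟨b, hb, hbD, hbv⟩ := exists_injective_forall_mem_notMem_range
      (fun q ↦ {b : X | Fin.snoc (p q) b ∈ D (i + 1)}) v
      fun q ↦ (Nat.cast_le.2 hcard).trans (hD i _ (hp q))
    exact ⟨b, hbD, fun _ ↦ ⟨hb, hbv⟩⟩
  · choose b hb using fun q ↦ exists_child hN hD (hp q)
    exact ⟨b, hb, fun h ↦ absurd h hcard⟩

/-- `IsSeparatingLevel D r ι i a y`: the entries `y f` are admissible values at level `i` of a
family of branches of the tree `D` indexed by `f : F`, whose entries at the levels `j < i` are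
`a j f`. Up to level `ι n` the branch of `f` may depend only on the class of `f` modulo `r n`; at
level `ι n` it must determine both that class and `n`. -/
structure IsSeparatingLevel (D : (i : ℕ) → Set (Fin i → X)) (r : ℕ → Setoid F) (ι : ℕ → ℕ)
    (i : ℕ) (a : ℕ → F → X) (y : F → X) : Prop where
  snoc_mem : ∀ f, Fin.snoc (fun j : Fin i ↦ a j f) (y f) ∈ D (i + 1)
  eq_of_rel : ∀ n, i ≤ ι n → ∀ f f', r n f f' → y f = y f'
  rel_of_eq : ∀ n, i = ι n → ∀ f f', y f = y f' → r n f f'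
  ne_of_lt : ∀ n, i = ι n → ∀ m < n, ∀ f f', y f ≠ a (ι m) f'

namespace IsSeparatingLevel

theorem congr (hι : StrictMono ι) {i : ℕ} {a a' : ℕ → F → X} {y : F → X}
    (h : ∀ j < i, a j = a' j) (hy : IsSeparatingLevel D r ι i a y) :
    IsSeparatingLevel D r ι i a' y where
  snoc_mem f := by
    have hprefix : (fun j : Fin i ↦ a' j f) = fun j : Fin i ↦ a j f :=
      funext fun j ↦ congrFun (h j j.2).symm f
    rw [hprefix]
    exact hy.snoc_mem f
  eq_of_rel := hy.eq_of_rel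
  rel_of_eq := hy.rel_of_eq
  ne_of_lt n hn m hm f f' := by
    rw [← h (ι m) (hn ▸ hι hm)]
    exact hy.ne_of_lt n hn m hm f f'

theorem prefix_mem (hD : (D 0).Nonempty) {i : ℕ} {a : ℕ → F → X}
    (ha : ∀ j < i, IsSeparatingLevel D r ι j a (a j)) (f : F) :
    (fun j : Fin i ↦ a j f) ∈ D i := by
  cases i with
  | zero => exact (Subsingleton.mem_iff_nonempty).2 hD
  | succ i =>
    rw [← Fin.snoc_init_self fun j : Fin (i + 1) ↦ a j f]
    exact (ha i i.lt_succ_self).snoc_mem f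

theorem exists_next [∀ n, Finite (Quotient (r n))] (hr : Antitone r) (hι : StrictMono ι)
    (hN : ∀ i, 0 < N i) (hD₀ : (D 0).Nonempty)
    (hD : ∀ i, ∀ β ∈ D i, (N i : ℕ∞) ≤ {b : X | Fin.snoc β b ∈ D (i + 1)}.encard)
    (hιN : ∀ n, Nat.card (Quotient (r n)) + Nat.card (Σ m : Fin n, Quotient (r m)) ≤ N (ι n))
    {i : ℕ} {a : ℕ → F → X} (ha : ∀ j < i, IsSeparatingLevel D r ι j a (a j)) :
    ∃ y, IsSeparatingLevel D r ι i a y := by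
  classical
  have hex : ∃ n, i ≤ ι n := ⟨i, hι.le_apply⟩
  obtain ⟨n, hin, hmin⟩ : ∃ n, i ≤ ι n ∧ ∀ m, i ≤ ι m → n ≤ m :=
    ⟨Nat.find hex, Nat.find_spec hex, fun m ↦ Nat.find_min' hex⟩
  have hprefix (f : F) : (fun j : Fin i ↦ a j (Quotient.mk (r n) f).out) = fun j : Fin i ↦ a j f :=
    funext fun j ↦ (ha j j.2).eq_of_rel n (j.2.le.trans hin) _ _ (Quotient.mk_out f)
  obtain ⟨b, hbD, hb⟩ := exists_child_selection hN hD
    (fun (q : Quotient (r n)) (j : Fin i) ↦ a j q.out) (fun q ↦ prefix_mem hD₀ ha q.out)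
    (fun q : Σ m : Fin n, Quotient (r m) ↦ a (ι q.1) q.2.out)
  refine ⟨fun f ↦ b ⟦f⟧, fun f ↦ ?_, fun m hm f f' h ↦ ?_, fun m hm f f' h ↦ ?_,
    fun m hm l hl f f' h ↦ ?_⟩
  · rw [← hprefix f]
    exact hbD ⟦f⟧
  · exact congrArg b (Quotient.sound (hr (hmin m hm) h))
  · obtain rfl : n = m := le_antisymm (hmin m hm.le) (hι.le_iff_le.1 (hm ▸ hin))
    exact Quotient.exact ((hb (hm ▸ hιN n)).1 h)
  · obtain rfl : n = m := le_antisymm (hmin m hm.le) (hι.le_iff_le.1 (hm ▸ hin))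
    refine (hb (hm ▸ hιN n)).2 ⟦f⟧ ⟨⟨⟨l, hl⟩, ⟦f'⟧⟩, ?_⟩
    exact ((ha (ι l) (hm ▸ hι hl)).eq_of_rel l le_rfl _ _ (Quotient.mk_out f')).trans h.symm

theorem apply_eq_apply_iff {a : ℕ → F → X}
    (ha : ∀ i, IsSeparatingLevel D r ι i a (a i)) {f f' : F} {m n : ℕ} :
    a (ι m) f = a (ι n) f' ↔ m = n ∧ r m f f' := by
  refine ⟨fun h ↦ ?_, ?_⟩
  · rcases lt_trichotomy m n with hmn | rfl | hnm
    · exact absurd h.symm ((ha (ι n)).ne_of_lt n rfl m hmn f' f)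
    · exact ⟨rfl, (ha (ι m)).rel_of_eq m rfl f f' h⟩
    · exact absurd h ((ha (ι m)).ne_of_lt m rfl n hnm f f')
  · rintro ⟨rfl, h⟩
    exact (ha (ι m)).eq_of_rel m le_rfl f f' h

end IsSeparatingLevel

theorem exists_separating_branches [∀ n, Finite (Quotient (r n))] (hr : Antitone r)
    (hN : ∀ i, 0 < N i) (hNunb : ¬BddAbove (range N)) (hD₀ : (D 0).Nonempty)
    (hD : ∀ i, ∀ β ∈ D i, (N i : ℕ∞) ≤ {b : X | Fin.snoc β b ∈ D (i + 1)}.encard) :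
    ∃ (ι : ℕ → ℕ) (β : F → ℕ → X), (∀ f i, (fun j : Fin i ↦ β f j) ∈ D i) ∧
      ∀ f f' m n, β f (ι m) = β f' (ι n) ↔ m = n ∧ r m f f' := by
  obtain ⟨ι, hι, hιN⟩ := Filter.extraction_forall_of_frequently fun n ↦
    frequently_atTop_le_of_not_bddAbove_range hNunb
      (Nat.card (Quotient (r n)) + Nat.card (Σ m : Fin n, Quotient (r m)))
  obtain ⟨β₀, hβ₀⟩ := hD₀
  have : Nonempty X := (exists_child hN hD hβ₀).nonempty
  obtain ⟨a, ha⟩ := exists_seq_forall_of_forall_lt (IsSeparatingLevel D r ι)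
    (IsSeparatingLevel.congr hι)
    fun i a ↦ IsSeparatingLevel.exists_next hr hι hN ⟨β₀, hβ₀⟩ hD hιN
  exact ⟨ι, fun f i ↦ a i f, fun f i ↦ IsSeparatingLevel.prefix_mem ⟨β₀, hβ₀⟩ (fun j _ ↦ ha j) f,
    fun f f' m n ↦ IsSeparatingLevel.apply_eq_apply_iff ha⟩

end Tree

section Charts

variable {X : Type u}

namespace Chart

theorem ext {f g : Chart X} (h : ∀ x y, (x, y) ∈ f.rel ↔ (x, y) ∈ g.rel) : f = g := by
  obtain ⟨rel, _, _⟩ := f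
  obtain rfl : rel = g.rel := Set.ext fun p ↦ h p.1 p.2
  rfl

/-- An injective map `X → X`, viewed as a chart with full domain. -/
def ofInjective (c : X → X) (hc : Function.Injective c) : Chart X where
  rel := {p | c p.1 = p.2}
  functional _ _ _ h h' := h.symm.trans h'
  injective _ _ _ h h' := hc (h.trans h'.symm)

variable {b c : X → X} {hb : Function.Injective b} {hc : Function.Injective c} {g : Chart X}

theorem ofInjective_mul (h : ∀ x, (b x, c x) ∈ g.rel) :
    ofInjective b hb * g = ofInjective c hc :=
  ext fun x y ↦ by
    constructor
    · rintro ⟨_, (rfl : b x = _), hy⟩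
      exact g.functional (h x) hy
    · rintro (rfl : c x = y)
      exact ⟨b x, rfl, h x⟩

theorem mul_inv_ofInjective (h : ∀ x, (c x, b x) ∈ g.rel) :
    g * (ofInjective b hb)⁻¹ = (ofInjective c hc)⁻¹ :=
  ext fun x y ↦ by
    constructor
    · rintro ⟨_, hx, (rfl : b y = _)⟩
      exact g.injective (h y) hx
    · rintro (rfl : c y = x)
      exact ⟨b y, h y, rfl⟩

theorem mem_rel_conj {x y : X} :
    (x, y) ∈ (ofInjective c hc * g * (ofInjective c hc)⁻¹).rel ↔ (c x, c y) ∈ g.rel := by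
  constructor
  · rintro ⟨_, ⟨_, (rfl : c x = _), h⟩, (rfl : c y = _)⟩
    exact h
  · intro h
    exact ⟨c y, ⟨c x, rfl, h⟩, rfl⟩

end Chart

theorem BSleq.mono_left {S S' T : Set (Chart X)} (hSS' : S ⊆ S') (h : BSleq S' T) : BSleq S T :=
  let ⟨U, hU, hS'⟩ := h
  ⟨U, hU, hSS'.trans hS'⟩

/-- The charts that map no point out of its part of `P`, the analogue of `PStab P` for partial
bijections. -/
def partwiseCharts (P : Set (Set X)) : Set (Chart X) :=
  {f | ∀ B ∈ P, ∀ x y, (x, y) ∈ f.rel → (x ∈ B ↔ y ∈ B)}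

theorem PStab_subset_partwiseCharts (P : Set (Set X)) : PStab P ⊆ partwiseCharts P := by
  rintro f ⟨-, hf⟩ B hB x y hxy
  constructor
  · intro hx
    exact (hf B hB).subset ⟨x, hx, hxy⟩
  · intro hy
    obtain ⟨x', hx', hx'y⟩ := (hf B hB).superset hy
    rwa [f.injective hxy hx'y]

variable {K : Type*}

/-- The charts preserving a level function `k` on the points. -/
def levelCharts (k : X → K) : Set (Chart X) :=
  {f | ∀ x y, (x, y) ∈ f.rel → k x = k y}

theorem partwiseCharts_subset_levelCharts {P : Set (Set X)} (hP : ∀ x, ∃ B ∈ P, x ∈ B) {k : X → K}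
    (hk : ∀ B ∈ P, ∀ x ∈ B, ∀ y ∈ B, k x = k y) : partwiseCharts P ⊆ levelCharts k := by
  intro f hf x y hxy
  obtain ⟨B, hB, hx⟩ := hP x
  exact hk B hB x hx y ((hf B hB x y hxy).1 hx)

variable [Preorder K]

/-- Two charts agree up to level `n` (for a level function `k`) if they have the same trace on the
set of points of level at most `n`. -/
def agreeUpTo (k : X → K) (n : K) : Setoid (Chart X) :=
  Setoid.ker fun f ↦ f.rel ∩ {x | k x ≤ n} ×ˢ {x | k x ≤ n}

variable {k : X → K}

theorem agreeUpTo_antitone : Antitone (agreeUpTo k) := by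
  intro m n hmn f f' h
  have hsub : {x | k x ≤ m} ⊆ {x | k x ≤ n} := fun x hx ↦ le_trans hx hmn
  have htrace (g : Chart X) : g.rel ∩ {x | k x ≤ m} ×ˢ {x | k x ≤ m} =
      g.rel ∩ {x | k x ≤ n} ×ˢ {x | k x ≤ n} ∩ {x | k x ≤ m} ×ˢ {x | k x ≤ m} := by
    rw [inter_assoc, inter_eq_right.2 (prod_mono hsub hsub)]
  rw [agreeUpTo, Setoid.ker_def] at h ⊢
  rw [htrace f, htrace f', h]

theorem finite_quotient_agreeUpTo {n : K} (hk : {x | k x ≤ n}.Finite) :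
    Finite (Quotient (agreeUpTo k n)) := by
  have hrange : (range fun f : Chart X ↦ f.rel ∩ {x | k x ≤ n} ×ˢ {x | k x ≤ n}).Finite :=
    (hk.prod hk).finite_subsets.subset (range_subset_iff.2 fun f ↦ inter_subset_right)
  have := hrange.to_subtype
  exact Finite.of_equiv _ (Setoid.quotientKerEquivRange _).symm

theorem mem_rel_of_agreeUpTo {n : K} {f f' : Chart X} (h : agreeUpTo k n f f') {x y : X}
    (hxy : (x, y) ∈ f.rel) (hx : k x ≤ n) (hy : k y ≤ n) : (x, y) ∈ f'.rel :=
  ((Set.ext_iff.1 h (x, y)).1 ⟨hxy, hx, hy⟩).1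

/-- `IsTraceCode k code`: the point `code f x` encodes exactly the point `x` together with the trace
of the chart `f` on the points of level at most `k x`. -/
def IsTraceCode (k : X → K) (code : Chart X → X → X) : Prop :=
  ∀ f f' x x', code f x = code f' x' ↔ x = x' ∧ agreeUpTo k (k x) f f'

namespace IsTraceCode

variable {code : Chart X → X → X}

theorem injective (h : IsTraceCode k code) (f : Chart X) : Function.Injective (code f) :=
  fun x x' hx ↦ ((h f f x x').1 hx).1

/-- The chart that acts on the codes of points as every level-preserving chart acts on the points
themselves. -/
def universalChart (h : IsTraceCode k code) : Chart X where
  rel := {p | ∃ f ∈ levelCharts k, ∃ x y, (x, y) ∈ f.rel ∧ code f x = p.1 ∧ code f y = p.2}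
  functional := by
    rintro _ _ _ ⟨f, hf, x, y, hxy, rfl, rfl⟩ ⟨f', -, x', y', hxy', hx, rfl⟩
    obtain ⟨rfl, hff'⟩ := (h f f' x x').1 hx.symm
    have hk : k x = k y := hf x y hxy
    obtain rfl : y = y' :=
      f'.functional (mem_rel_of_agreeUpTo hff' hxy le_rfl hk.ge) hxy'
    exact (h f f' y y).2 ⟨rfl, hk ▸ hff'⟩
  injective := by
    rintro _ _ _ ⟨f, hf, x, y, hxy, rfl, rfl⟩ ⟨f', -, x', y', hxy', rfl, hy⟩
    obtain ⟨rfl, hff'⟩ := (h f f' y y').1 hy.symm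
    have hk : k x = k y := hf x y hxy
    obtain rfl : x = x' :=
      f'.injective (mem_rel_of_agreeUpTo hff' hxy hk.le le_rfl) hxy'
    exact (h f f' x x).2 ⟨rfl, hk ▸ hff'⟩

theorem mem_universalChart (h : IsTraceCode k code) {f : Chart X} (hf : f ∈ levelCharts k)
    {x y : X} : (code f x, code f y) ∈ h.universalChart.rel ↔ (x, y) ∈ f.rel := by
  constructor
  · rintro ⟨f', hf', x', y', hxy, hx, hy⟩
    obtain ⟨rfl, hff'⟩ := (h f' f x' x).1 hx
    obtain ⟨rfl, -⟩ := (h f' f y' y).1 hy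
    exact mem_rel_of_agreeUpTo hff' hxy le_rfl (hf' x' y' hxy).ge
  · intro hxy
    exact ⟨f, hf, x, y, hxy, rfl, rfl⟩

theorem bSleq_levelCharts (h : IsTraceCode k code) {S : Set (Chart X)} {b : X → X}
    (hS : ∀ f, ∃ g ∈ S, ∃ g' ∈ S, ∀ x, (b x, code f x) ∈ g.rel ∧ (code f x, b x) ∈ g'.rel) :
    BSleq (levelCharts k) S := by
  have hb : Function.Injective b := by
    intro x x' hxx'
    let f := Chart.ofInjective id (Function.injective_id (α := X))
    obtain ⟨g, -, g', -, hgg'⟩ := hS f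
    have hx' : (b x, code f x') ∈ g.rel := hxx' ▸ (hgg' x').1
    exact h.injective f (g.functional (hgg' x).1 hx')
  let u := Chart.ofInjective b hb
  let w := h.universalChart
  refine ⟨{u, w, u⁻¹}, by simp, fun f hf ↦ ?_⟩
  obtain ⟨g, hg, g', hg', hgg'⟩ := hS f
  have hfactor : u * g * w * (g' * u⁻¹) = f := by
    rw [Chart.ofInjective_mul (hc := h.injective f) fun x ↦ (hgg' x).1,
      Chart.mul_inv_ofInjective (hc := h.injective f) fun x ↦ (hgg' x).2]
    exact Chart.ext fun x y ↦ Chart.mem_rel_conj.trans (h.mem_universalChart hf)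
  have hgen {v : Chart X} (hv : v ∈ S ∪ {u, w, u⁻¹}) : InGen (S ∪ {u, w, u⁻¹}) v := .base hv
  rw [← hfactor]
  exact (((hgen (by simp)).mul (hgen (.inl hg))).mul (hgen (by simp))).mul
    ((hgen (.inl hg')).mul (hgen (by simp)))

end IsTraceCode

end Charts

theorem exists_injective_sqrt_eq_of_mem {X : Type*} [Countable X] {P : Set (Set X)}
    (hP : Setoid.IsPartition P) (hfin : ∀ B ∈ P, B.Finite) :
    ∃ ν : X → ℕ, Function.Injective ν ∧
      ∀ B ∈ P, ∀ x ∈ B, ∀ y ∈ B, Nat.sqrt (ν x) = Nat.sqrt (ν y) := by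
  obtain ⟨e, he⟩ := exists_injective_nat X
  choose part hpart hunique using hP.2
  let k (x : X) : ℕ := sSup (e '' part x)
  have hk {B x} (hB : B ∈ P) (hx : x ∈ B) : k x = sSup (e '' B) := by
    rw [hunique x B ⟨hB, hx⟩]
  have hek (x : X) : e x ≤ k x :=
    le_csSup ((hfin _ (hpart x).1).image e).bddAbove (mem_image_of_mem e (hpart x).2)
  -- As `e x ≤ k x`, the number `k x ^ 2 + e x` lies below `(k x + 1) ^ 2`.
  have hsqrt (x : X) : Nat.sqrt (k x * k x + e x) = k x :=
    Nat.sqrt_add_eq _ ((hek x).trans (Nat.le_add_left _ _))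
  refine ⟨fun x ↦ k x * k x + e x, fun x y hxy ↦ ?_, fun B hB x hx y hy ↦ ?_⟩
  · have hkxy : k x = k y := by rw [← hsqrt x, ← hsqrt y]; exact congrArg Nat.sqrt hxy
    exact he (by simpa only [hkxy, add_right_inj] using hxy)
  · rw [hsqrt, hsqrt, hk hB hx, hk hB hy]

theorem finite_setOf_sqrt_le {X : Type*} {ν : X → ℕ}
    (hν : Function.Injective ν) (n : ℕ) : {x | Nat.sqrt (ν x) ≤ n}.Finite := by
  have hsub : {x | Nat.sqrt (ν x) ≤ n} ⊆ ν ⁻¹' Iio ((n + 1) * (n + 1)) :=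
    fun x hx ↦ Nat.sqrt_lt.1 (Nat.lt_succ_of_le hx)
  exact ((finite_Iio _).preimage hν.injOn).subset hsub

theorem stmt8_general {X : Type u} [Countable X] (S : Set (Chart X))
    (P : Set (Set X)) (hP : Setoid.IsPartition P) (hfin : ∀ B ∈ P, B.Finite)
    (α : ℕ → X) (N : ℕ → ℕ) (hNpos : ∀ i, 0 < N i) (hNunb : ∀ m : ℕ, ∃ i, m ≤ N i)
    (D : (i : ℕ) → Set (Fin i → X)) (hD₀ : (D 0).Nonempty)
    (hD : ∀ (i : ℕ) (β : Fin i → X), β ∈ D i →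
      (N i : Cardinal) ≤ #↥{b : X | Fin.snoc β b ∈ D (i + 1)})
    (hS : ∀ β : ℕ → X, (∀ i : ℕ, (fun j : Fin i ↦ β j) ∈ D i) →
      ∃ g ∈ S, ∃ g' ∈ S, ∀ i : ℕ, (α i, β i) ∈ g.rel ∧ (β i, α i) ∈ g'.rel) :
    BSleq (partwiseCharts P) S := by
  obtain ⟨ν, hν, hνP⟩ := exists_injective_sqrt_eq_of_mem hP hfin
  let k (x : X) : ℕ := Nat.sqrt (ν x)
  let r (n : ℕ) : Setoid (Chart X) := agreeUpTo k (Nat.sqrt n)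
  have hr : Antitone r := agreeUpTo_antitone.comp_monotone fun _ _ ↦ Nat.sqrt_le_sqrt
  have (n : ℕ) : Finite (Quotient (r n)) := finite_quotient_agreeUpTo (finite_setOf_sqrt_le hν _)
  have hNbdd : ¬BddAbove (range N) := not_bddAbove_iff.2 fun m ↦
    let ⟨i, hi⟩ := hNunb (m + 1)
    ⟨N i, mem_range_self i, hi⟩
  obtain ⟨ι, β, hβ, hβι⟩ := exists_separating_branches hr hNpos hNbdd hD₀
    fun i β hβ ↦ Cardinal.natCast_le_toENat.2 (hD i β hβ)
  have hcode : IsTraceCode k fun f x ↦ β f (ι (ν x)) := by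
    intro f f' x x'
    rw [hβι, hν.eq_iff]
  refine (hcode.bSleq_levelCharts (b := fun x ↦ α (ι (ν x))) fun f ↦ ?_).mono_left
    (partwiseCharts_subset_levelCharts (fun x ↦ (hP.2 x).exists) hνP)
  obtain ⟨g, hg, g', hg', hgg'⟩ := hS (β f) (hβ f)
  exact ⟨g, hg, g', hg', fun x ↦ hgg' _⟩

/-- analogue of Bergman–Shelah Lemma 12: under the stated hypotheses
on the sequence `α`, the unbounded sequence of positive integers `N`, the sets
`D i` and the subsemigroup `S` of `I_X`, we get `PStab 𝒫_ω ≼ S` for the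
ℵ₀-unbounded partition `𝒫_ω`. -/
theorem stmt8 {X : Type u} [Countable X] [Infinite X] (S : Set (Chart X))
    (hS : IsSubsemigroup S)
    (Pω : Set (Set X)) (hpart : Setoid.IsPartition Pω)
    (hfin : ∀ B ∈ Pω, B.Finite) (hunb : ∀ n : ℕ, ∃ B ∈ Pω, n ≤ B.ncard)
    (α : ℕ → X) (hα : Function.Injective α)
    (N : ℕ → ℕ) (hNpos : ∀ i, 0 < N i) (hNunb : ∀ m : ℕ, ∃ i, m ≤ N i)
    (D : (i : ℕ) → Set (Fin i → X)) (hne : ∀ i, (D i).Nonempty)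
    (h1 : ∀ (i : ℕ) (β : Fin (i + 1) → X), β ∈ D (i + 1) → Fin.init β ∈ D i)
    (h2 : ∀ (i : ℕ) (β : Fin i → X), β ∈ D i →
      (N i : Cardinal) ≤ #↥{b : X | Fin.snoc β b ∈ D (i + 1)})
    (h3 : ∀ β : ℕ → X, (∀ i : ℕ, (fun j : Fin i => β j.1) ∈ D i) →
      ∃ g ∈ S, ∃ g' ∈ S, ∀ i : ℕ, (α i, β i) ∈ g.rel ∧ (β i, α i) ∈ g'.rel) :
    BSleq (PStab Pω) S :=
  (stmt8_general S Pω hpart hfin α N hNpos hNunb D (hne 0) h2 h3).mono_left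
    (PStab_subset_partwiseCharts Pω)
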